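/- For all integers b ≥ 3 and w ≥ 1, ∑_{n=0}^∞ (2n+1) ∏_{i=0}^{n-1} (w+i)/(b+w+i) − (∑_{n=0}^∞ ∏_{i=0}^{n-1} (w+i)/(b+w+i))² = bw(b+w-1)/((b-1)²(b-2)). Probabilistically: the waiting time T_{b,w} for the first black ball in a Pólya urn with b black and w white balls has variance Var(T_{b,w}) = bw(b+w-1)/((b-1)²(b-2)). -/

import Mathlib

/-- The tail probability `P(T > n)`. -/
noncomputable def polyaTail (b w : ℝ) (n : ℕ) : ℝ :=
  ∏ i ∈ Finset.range n, ((w + i) / (b + w + i))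

lemma polyaTail_succ (b w : ℝ) (n : ℕ) :
    polyaTail b w (n + 1) = polyaTail b w n * ((w + n) / (b + w + n)) := by
  simp only [polyaTail, Finset.prod_range_succ]

lemma polyaTail_nonneg (b w : ℝ) (hb : 3 ≤ b) (hw : 1 ≤ w) (n : ℕ) : 0 ≤ polyaTail b w n := by
  unfold polyaTail
  exact Finset.prod_nonneg fun i _ => by positivity

lemma polyaTail_bound (b w : ℝ) (hb : 3 ≤ b) (hw : 1 ≤ w) (n : ℕ) :
    polyaTail b w n * ((w + n) * (w + n + 1) * (w + n + 2)) ≤ w * (w + 1) * (w + 2) := by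
  induction n with
  | zero => simp [polyaTail]
  | succ n ih =>
    refine le_trans ?_ ih
    rw [polyaTail_succ]
    have hp := polyaTail_nonneg b w hb hw n
    have hn : (0 : ℝ) ≤ n := Nat.cast_nonneg n
    have hd : 0 < b + w + n := by linarith
    have h1 : (w + n + 3) / (b + w + n) ≤ 1 := by
      rw [div_le_one hd]; linarith
    have h2 : 0 ≤ polyaTail b w n * ((w + n) * (w + n + 1) * (w + n + 2)) := by positivity
    calc polyaTail b w n * ((w + n) / (b + w + n)) *
          ((w + ((n + 1 : ℕ) : ℝ)) * (w + ((n + 1 : ℕ) : ℝ) + 1) * (w + ((n + 1 : ℕ) : ℝ) + 2))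
        = polyaTail b w n * ((w + n) * (w + n + 1) * (w + n + 2)) *
          ((w + n + 3) / (b + w + n)) := by push_cast; ring
      _ ≤ _ := mul_le_of_le_one_right h2 h1

lemma polyaTail_tendsto (b w α β : ℝ) (hb : 3 ≤ b) (hw : 1 ≤ w) (hα : 0 ≤ α) (hβ : 0 ≤ β) :
    Filter.Tendsto (fun n : ℕ => (b + w + n - 1) * (α * n + β) * polyaTail b w n)
      Filter.atTop (nhds 0) := by
  have hlim := (tendsto_one_div_add_atTop_nhds_zero_nat (𝕜 := ℝ)).const_mul
    (b * (α + β) * (w * (w + 1) * (w + 2)))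
  rw [mul_zero] at hlim
  refine squeeze_zero (fun n => ?_) (fun n => ?_) hlim
  · have hp := polyaTail_nonneg b w hb hw n
    have hn : (0 : ℝ) ≤ n := Nat.cast_nonneg n
    have : 0 ≤ b + w + n - 1 := by linarith
    positivity
  · have hp := polyaTail_nonneg b w hb hw n
    have hB := polyaTail_bound b w hb hw n
    have hn : (0 : ℝ) ≤ n := Nat.cast_nonneg n
    have h0 : 0 ≤ b + w + n - 1 := by linarith
    have h1 : b + w + n - 1 ≤ b * (w + n + 1) := by nlinarith
    have h2 : α * n + β ≤ (α + β) * (w + n + 2) := by nlinarith [mul_nonneg hα hn, mul_nonneg hβ hn]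
    rw [mul_one_div, le_div_iff₀ (by positivity)]
    calc (b + w + n - 1) * (α * n + β) * polyaTail b w n * ((n : ℝ) + 1)
        ≤ (b * (w + n + 1)) * ((α + β) * (w + n + 2)) * polyaTail b w n * (w + n) := by
          gcongr ?_ * ?_ * _ * ?_
          linarith
      _ = b * (α + β) * (polyaTail b w n * ((w + n) * (w + n + 1) * (w + n + 2))) := by ring
      _ ≤ _ := by gcongr

lemma polyaTail_hasSum (b w α β : ℝ) (hb : 3 ≤ b) (hw : 1 ≤ w) (hα : 0 ≤ α) (hβ : 0 ≤ β)
    (hαβ : 0 ≤ β * (b - 1) - α * w) :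
    HasSum (fun n : ℕ => (α * (b - 2) * n + (β * (b - 1) - α * w)) * polyaTail b w n)
      ((b + w - 1) * β) := by
  rw [hasSum_iff_tendsto_nat_of_nonneg]
  · have key : ∀ n : ℕ, (α * (b - 2) * n + (β * (b - 1) - α * w)) * polyaTail b w n
        = (b + w + n - 1) * (α * n + β) * polyaTail b w n
          - (b + w + (n + 1 : ℕ) - 1) * (α * (n + 1 : ℕ) + β) * polyaTail b w (n + 1) := by
      intro n
      have hn : (0 : ℝ) ≤ n := Nat.cast_nonneg n
      have hd : b + w + n ≠ 0 := by linarith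
      rw [polyaTail_succ]
      push_cast
      field_simp
      ring
    simp_rw [key]
    have h := (polyaTail_tendsto b w α β hb hw hα hβ).const_sub ((b + w - 1) * β)
    rw [sub_zero] at h
    refine h.congr fun n => ?_
    rw [Finset.sum_range_sub'
      (fun n : ℕ => (b + w + n - 1) * (α * n + β) * polyaTail b w n)]
    simp [polyaTail]
  · intro n
    have hp := polyaTail_nonneg b w hb hw n
    have : 0 ≤ b - 2 := by linarith
    positivity


/-- The waiting time `T_{b,w}` for the first black ball in a Pólya urn with `b ≥ 3` black
and `w ≥ 1` white balls has variance
`Var(T_{b,w}) = E[T_{b,w}²] - (E[T_{b,w}])² = bw(b+w-1)/((b-1)²(b-2))`, where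
`E[T_{b,w}²] = ∑_{n=0}^∞ (2n+1) P(T_{b,w} > n)` and `E[T_{b,w}] = ∑_{n=0}^∞ P(T_{b,w} > n)`. -/
theorem polya_variance_general (b w : ℕ) (hb : 3 ≤ b) (hw : 1 ≤ w) :
    (∑' n : ℕ,
        (2 * (n : ℝ) + 1) * ∏ i ∈ Finset.range n, (((w : ℝ) + i) / ((b : ℝ) + w + i)))
      - (∑' n : ℕ, ∏ i ∈ Finset.range n, (((w : ℝ) + i) / ((b : ℝ) + w + i))) ^ 2
      = (b : ℝ) * w * ((b : ℝ) + w - 1) / (((b : ℝ) - 1) ^ 2 * ((b : ℝ) - 2)) := by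
  have hb' : (3 : ℝ) ≤ b := by exact_mod_cast hb
  have hw' : (1 : ℝ) ≤ w := by exact_mod_cast hw
  have e1 : (b : ℝ) - 1 ≠ 0 := by linarith
  have e2 : (b : ℝ) - 2 ≠ 0 := by linarith
  have p1 : 0 < (b : ℝ) - 1 := by linarith
  have p2 : 0 < (b : ℝ) - 2 := by linarith
  have c1 : 1 / ((b : ℝ) - 1) * ((b : ℝ) - 1) = 1 := by field_simp
  have c2 : (1 + 2 / ((b : ℝ) - 2) * w) / ((b : ℝ) - 1) * ((b : ℝ) - 1)
      - 2 / ((b : ℝ) - 2) * w = 1 := by field_simp; ring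
  have c3 : 2 / ((b : ℝ) - 2) * ((b : ℝ) - 2) = 2 := by field_simp
  have s1 := polyaTail_hasSum b w 0 (1 / ((b : ℝ) - 1)) hb' hw' le_rfl (by positivity)
    (by rw [c1]; simp)
  have s2 := polyaTail_hasSum b w (2 / ((b : ℝ) - 2))
    ((1 + 2 / ((b : ℝ) - 2) * w) / ((b : ℝ) - 1)) hb' hw' (by positivity) (by positivity)
    (by rw [c2]; simp)
  simp only [c1, c2, c3, zero_mul, sub_zero, zero_add, one_mul] at s1 s2
  have t1 := s1.tsum_eq
  have t2 := s2.tsum_eq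
  unfold polyaTail at t1 t2
  rw [t1, t2]
  field_simp
  ring
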